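/- arXiv:1505.05995 — 5 statements merged into one kernel-verified Lean document; each statement's English description precedes it below -/
import Mathlib

section
/- Let λ ≥ 1 and let ξ₁, ξ₂ be real numbers with |ξ₁| ≥ 100, |ξ₂| ≥ 100, and set ξ = ξ₁ + ξ₂. If |ξ| ≥ 1, then |3 ξ ξ₁ ξ₂ − (ξ₁² + ξ₁ξ₂ + ξ₂²)/(λ⁴ ξ ξ₁ ξ₂)| ≥ |ξ ξ₁ ξ₂| / 4. -/
/-- Lower bound on the resonance function of the Ostrovsky equation with positive
dispersion, for two large input frequencies and an output frequency of size at least 1. -/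
theorem ostrovsky_resonance_lower_bound (lam ξ ξ₁ ξ₂ : ℝ)
    (hlam : 1 ≤ lam) (hξ₁ : 100 ≤ |ξ₁|) (hξ₂ : 100 ≤ |ξ₂|)
    (hξsum : ξ = ξ₁ + ξ₂) (hξ : 1 ≤ |ξ|) :
    |ξ * ξ₁ * ξ₂| / 4
      ≤ |3 * ξ * ξ₁ * ξ₂ - (ξ₁ ^ 2 + ξ₁ * ξ₂ + ξ₂ ^ 2) / (lam ^ 4 * ξ * ξ₁ * ξ₂)| := by
  have hm : 10000 ≤ |ξ₁ * ξ₂| := by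
    rw [abs_mul]; nlinarith
  have hx2 : 1 ≤ ξ ^ 2 := by
    rw [← sq_abs]; nlinarith
  have hP : 0 < |ξ * ξ₁ * ξ₂| := by
    rw [mul_assoc, abs_mul]; nlinarith
  have hl : 1 ≤ lam ^ 4 := one_le_pow₀ hlam
  have hQ : |ξ₁ ^ 2 + ξ₁ * ξ₂ + ξ₂ ^ 2| ≤ |ξ * ξ₁ * ξ₂| ^ 2 := by
    have h1 : ξ₁ ^ 2 + ξ₁ * ξ₂ + ξ₂ ^ 2 = ξ ^ 2 - ξ₁ * ξ₂ := by rw [hξsum]; ring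
    have h2 : |ξ ^ 2 - ξ₁ * ξ₂| ≤ ξ ^ 2 + |ξ₁ * ξ₂| := by
      have := abs_sub (ξ ^ 2) (ξ₁ * ξ₂)
      rwa [abs_of_nonneg (sq_nonneg ξ)] at this
    have h3 : |ξ * ξ₁ * ξ₂| ^ 2 = ξ ^ 2 * |ξ₁ * ξ₂| ^ 2 := by
      rw [mul_assoc, abs_mul, mul_pow, sq_abs ξ]
    rw [h1, h3]
    refine h2.trans ?_
    generalize |ξ₁ * ξ₂| = m at hm
    have h4 : 2 * m ≤ m ^ 2 := by nlinarith
    have h5 : m ^ 2 ≤ ξ ^ 2 * m ^ 2 := le_mul_of_one_le_left (sq_nonneg m) hx2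
    have h6 : ξ ^ 2 * 2 ≤ ξ ^ 2 * m ^ 2 :=
      mul_le_mul_of_nonneg_left (by nlinarith) (sq_nonneg ξ)
    linarith
  have hr : |(ξ₁ ^ 2 + ξ₁ * ξ₂ + ξ₂ ^ 2) / (lam ^ 4 * ξ * ξ₁ * ξ₂)| ≤ |ξ * ξ₁ * ξ₂| := by
    have e : lam ^ 4 * ξ * ξ₁ * ξ₂ = lam ^ 4 * (ξ * ξ₁ * ξ₂) := by ring
    rw [e, abs_div, abs_mul, abs_of_pos (by linarith : 0 < lam ^ 4), div_le_iff₀ (by positivity)]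
    refine hQ.trans ?_
    have := le_mul_of_one_le_left (sq_nonneg |ξ * ξ₁ * ξ₂|) hl
    linarith
  have h3 : |3 * ξ * ξ₁ * ξ₂| = 3 * |ξ * ξ₁ * ξ₂| := by
    rw [show 3 * ξ * ξ₁ * ξ₂ = 3 * (ξ * ξ₁ * ξ₂) by ring, abs_mul]; norm_num
  have := abs_sub_abs_le_abs_sub (3 * ξ * ξ₁ * ξ₂)
    ((ξ₁ ^ 2 + ξ₁ * ξ₂ + ξ₂ ^ 2) / (lam ^ 4 * ξ * ξ₁ * ξ₂))
  linarith
end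

section
/- Let λ ≥ 1 and let ξ₁ be a real number with |ξ₁| ≥ 100, let ξ be a real number with 0 < |ξ| ≤ 1, and set ξ₂ = ξ − ξ₁ (so ξ₂ ≠ 0). If |3 ξ ξ₁ ξ₂ − (ξ₁² + ξ₁ξ₂ + ξ₂²)/(λ⁴ ξ ξ₁ ξ₂)| < |ξ ξ₁ ξ₂| / 4, then |ξ| ≤ λ⁻² / |ξ₁|. -/
/-- Near-resonant interaction of a large frequency `ξ₁` with a small output frequency `ξ`
forces `|ξ| ≤ λ⁻²/|ξ₁|` for the Ostrovsky equation with positive dispersion. -/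
theorem ostrovsky_near_resonance_small_output (lam ξ ξ₁ ξ₂ : ℝ)
    (hlam : 1 ≤ lam) (hξ₁ : 100 ≤ |ξ₁|) (hξpos : 0 < |ξ|) (hξle : |ξ| ≤ 1)
    (hξ₂ : ξ₂ = ξ - ξ₁)
    (hres : |3 * ξ * ξ₁ * ξ₂ - (ξ₁ ^ 2 + ξ₁ * ξ₂ + ξ₂ ^ 2) / (lam ^ 4 * ξ * ξ₁ * ξ₂)|
      < |ξ * ξ₁ * ξ₂| / 4) :
    |ξ| ≤ lam ^ (-2 : ℤ) / |ξ₁| := by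
  have hl : 0 < lam := by linarith
  have hx : ξ ≠ 0 := abs_pos.mp hξpos
  have hx1 : 0 < |ξ₁| := by linarith
  have hx1' : ξ₁ ≠ 0 := abs_pos.mp hx1
  have hprod : |ξ * ξ₁| ≤ ξ₁ ^ 2 / 100 := by
    rw [abs_mul, ← sq_abs ξ₁]
    nlinarith
  have hprod2 := abs_le.mp hprod
  have hsq1 : 0 < ξ₁ ^ 2 := by positivity
  have hx2 : ξ₂ ≠ 0 := by
    intro h
    have h1 : ξ = ξ₁ := by linarith
    rw [h1] at hξle
    linarith
  have hP : ξ * ξ₁ * ξ₂ ≠ 0 := mul_ne_zero (mul_ne_zero hx hx1') hx2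
  have hQ : ξ₁ ^ 2 + ξ₁ * ξ₂ + ξ₂ ^ 2 ≤ 11 / 4 * ξ₂ ^ 2 := by
    subst hξ₂
    nlinarith [hprod2.2, sq_nonneg ξ]
  generalize hQd : ξ₁ ^ 2 + ξ₁ * ξ₂ + ξ₂ ^ 2 = Q at hQ hres
  have hmul := mul_lt_mul_of_pos_right hres (abs_pos.mpr hP)
  rw [← abs_mul] at hmul
  have e1 : (3 * ξ * ξ₁ * ξ₂ - Q / (lam ^ 4 * ξ * ξ₁ * ξ₂)) * (ξ * ξ₁ * ξ₂)
      = 3 * (ξ * ξ₁ * ξ₂) ^ 2 - Q / lam ^ 4 := by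
    field_simp
  have e2 : |ξ * ξ₁ * ξ₂| / 4 * |ξ * ξ₁ * ξ₂| = (ξ * ξ₁ * ξ₂) ^ 2 / 4 := by
    rw [← sq_abs (ξ * ξ₁ * ξ₂)]; ring
  rw [e1, e2] at hmul
  have h3 : 11 / 4 * (ξ * ξ₁ * ξ₂) ^ 2 < Q / lam ^ 4 := by
    linarith [(abs_lt.mp hmul).2, (abs_lt.mp hmul).1]
  rw [lt_div_iff₀ (by positivity)] at h3
  have h4 : (lam ^ 2 * (ξ * ξ₁)) ^ 2 * ξ₂ ^ 2 < 1 * ξ₂ ^ 2 := by nlinarith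
  have h5 : (lam ^ 2 * (ξ * ξ₁)) ^ 2 < 1 := lt_of_mul_lt_mul_right h4 (sq_nonneg _)
  have h6 : |lam ^ 2 * (ξ * ξ₁)| < 1 := (sq_lt_one_iff_abs_lt_one _).mp h5
  rw [abs_mul, abs_mul, abs_of_pos (by positivity : 0 < lam ^ 2)] at h6
  have e3 : lam ^ (-2 : ℤ) = 1 / lam ^ 2 := by
    rw [zpow_neg, one_div]; norm_cast
  rw [e3, div_div, le_div_iff₀ (by positivity)]
  nlinarith
end

section
/- Let λ ≥ 1 and let ξ, ξ₁ be real numbers with ξ ≠ 0, ξ₁ ≠ 0 and ξ₂ := ξ − ξ₁ ≠ 0. If |1 + 4/(3λ⁴ ξ² ξ₁ ξ₂)| ≤ 1/2, then either (ξ − √(ξ² + 32/(3λ⁴ξ²)))/2 ≤ ξ₁ ≤ (ξ − √(ξ² + 32/(9λ⁴ξ²)))/2, or (ξ + √(ξ² + 32/(9λ⁴ξ²)))/2 ≤ ξ₁ ≤ (ξ + √(ξ² + 32/(3λ⁴ξ²)))/2. -/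
/-- Localization of `ξ₁` when the factor `1 + 4/(3λ⁴ξ²ξ₁ξ₂)` from the factorized
resonance identity of the Ostrovsky equation with positive dispersion is small. -/
theorem ostrovsky_small_factor_localization (lam ξ ξ₁ : ℝ)
    (hlam : 1 ≤ lam) (hξ : ξ ≠ 0) (hξ₁ : ξ₁ ≠ 0) (hξ₂ : ξ - ξ₁ ≠ 0)
    (hsmall : |1 + 4 / (3 * lam ^ 4 * ξ ^ 2 * ξ₁ * (ξ - ξ₁))| ≤ 1 / 2) :
    ((ξ - Real.sqrt (ξ ^ 2 + 32 / (3 * lam ^ 4 * ξ ^ 2))) / 2 ≤ ξ₁ ∧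
        ξ₁ ≤ (ξ - Real.sqrt (ξ ^ 2 + 32 / (9 * lam ^ 4 * ξ ^ 2))) / 2) ∨
      ((ξ + Real.sqrt (ξ ^ 2 + 32 / (9 * lam ^ 4 * ξ ^ 2))) / 2 ≤ ξ₁ ∧
        ξ₁ ≤ (ξ + Real.sqrt (ξ ^ 2 + 32 / (3 * lam ^ 4 * ξ ^ 2))) / 2) := by
  have hl : 0 < lam := by linarith
  have hD : 0 < 3 * lam ^ 4 * ξ ^ 2 := by positivity
  obtain ⟨a, ha⟩ : ∃ a, a = 4 / (3 * lam ^ 4 * ξ ^ 2) := ⟨_, rfl⟩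
  have hapos : 0 < a := by rw [ha]; positivity
  have h1 : 32 / (3 * lam ^ 4 * ξ ^ 2) = 8 * a := by rw [ha]; ring
  have h2 : 32 / (9 * lam ^ 4 * ξ ^ 2) = 8 * a / 3 := by
    rw [ha]; field_simp; norm_num
  have h3 : 4 / (3 * lam ^ 4 * ξ ^ 2 * ξ₁ * (ξ - ξ₁)) = a / (ξ₁ * (ξ - ξ₁)) := by
    rw [ha, div_div, mul_assoc (3 * lam ^ 4 * ξ ^ 2)]
  rw [h3, abs_le] at hsmall
  rw [h1, h2]
  obtain ⟨q, hq⟩ : ∃ q, q = ξ₁ * (ξ - ξ₁) := ⟨_, rfl⟩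
  rw [← hq] at hsmall
  obtain ⟨hlo, hhi⟩ := hsmall
  have hqneg : q < 0 := by
    by_contra hc
    have : 0 ≤ a / q := div_nonneg hapos.le (not_lt.mp hc)
    linarith
  have e : a / q * q = a := div_mul_cancel₀ a hqneg.ne
  have b1 : -q ≤ 2 * a := by nlinarith
  have b2 : 2 * a / 3 ≤ -q := by nlinarith
  have hsq : (2 * ξ₁ - ξ) ^ 2 = ξ ^ 2 - 4 * q := by rw [hq]; ring
  have u : |2 * ξ₁ - ξ| ≤ Real.sqrt (ξ ^ 2 + 8 * a) :=
    Real.abs_le_sqrt (by linarith)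
  have l : Real.sqrt (ξ ^ 2 + 8 * a / 3) ≤ |2 * ξ₁ - ξ| := by
    rw [← Real.sqrt_sq_eq_abs]
    exact Real.sqrt_le_sqrt (by linarith)
  rcases le_total 0 (2 * ξ₁ - ξ) with h | h
  · rw [abs_of_nonneg h] at u l
    right; constructor <;> linarith
  · rw [abs_of_nonpos h] at u l
    left; constructor <;> linarith
end

section
/- There exists an absolute constant C > 0 such that for all λ ≥ 1, all real ξ ≠ 0 and τ, all integers k₁, k₂ ≥ 0 and all K > 0 the following holds. Let Λ be the set of (ξ₁, τ₁) ∈ ℝ² such that, writing ξ₂ = ξ − ξ₁ and τ₂ = τ − τ₁: ξ₁ ≠ 0, ξ₂ ≠ 0, ⟨τ₁ + ξ₁³ + 1/(λ⁴ξ₁)⟩ ≤ 2^{k₁+1}, ⟨τ₂ + ξ₂³ + 1/(λ⁴ξ₂)⟩ ≤ 2^{k₂+1}, |ξ₁ − ξ₂| ≥ K, and either ξ₁ξ₂ > 0 or |1 + 4/(3λ⁴ξ²ξ₁ξ₂)| > 1/2. Then the two-dimensional Lebesgue measure of Λ is at most C · min{ |ξ|^{-1/2} 2^{k₁+k₂},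 K^{-1} |ξ|^{-1} 2^{k₁+k₂} }. -/
open MeasureTheory Set
open scoped ENNReal NNReal

noncomputable section

/-- Japanese bracket `⟨x⟩ = (1+x²)^{1/2}`. -/
def jb (x : ℝ) : ℝ := Real.sqrt (1 + x ^ 2)

/-- Phase/modulation function `σ(ξ,τ) = τ + ξ³ + 1/(λ⁴ξ)`. -/
def phase (lam ξ τ : ℝ) : ℝ := τ + ξ ^ 3 + 1 / (lam ^ 4 * ξ)

lemma abs_le_jb (x : ℝ) : |x| ≤ jb x := by
  unfold jb
  apply Real.abs_le_sqrt
  linarith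

/-- A planar set with controlled horizontal diameter lying in a thin neighbourhood of a graph. -/
lemma vol_aux {S : Set (ℝ × ℝ)} {g : ℝ → ℝ} (hg : Measurable g) {d R : ℝ} (hd : 0 ≤ d)
    (_hR : 0 ≤ R) (h1 : ∀ q ∈ S, ∀ q' ∈ S, |q.1 - q'.1| ≤ d)
    (h2 : ∀ q ∈ S, |q.2 - g q.1| ≤ R) : volume S ≤ ENNReal.ofReal (4 * d * R) := by
  rcases S.eq_empty_or_nonempty with rfl | ⟨q0, hq0⟩
  · simp
  set T : Set (ℝ × ℝ) := {q | q.1 ∈ Icc (q0.1 - d) (q0.1 + d) ∧ q.2 ∈ Icc (g q.1 - R) (g q.1 + R)}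
    with hT
  have hST : S ⊆ T := by
    intro q hq
    have a := abs_le.1 (h1 q hq q0 hq0)
    have b := abs_le.1 (h2 q hq)
    exact ⟨⟨by linarith, by linarith⟩, ⟨by linarith, by linarith⟩⟩
  have hTm : MeasurableSet T := by
    have e : T = {q : ℝ × ℝ | q0.1 - d ≤ q.1} ∩ {q | q.1 ≤ q0.1 + d} ∩
        ({q | g q.1 - R ≤ q.2} ∩ {q | q.2 ≤ g q.1 + R}) := by
      ext q; simp [hT, Set.mem_Icc, and_assoc]
    rw [e]
    refine MeasurableSet.inter (MeasurableSet.inter ?_ ?_) (MeasurableSet.inter ?_ ?_)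
    · exact measurableSet_le (by fun_prop) (by fun_prop)
    · exact measurableSet_le (by fun_prop) (by fun_prop)
    · exact measurableSet_le (by fun_prop) (by fun_prop)
    · exact measurableSet_le (by fun_prop) (by fun_prop)
  refine (measure_mono hST).trans ?_
  rw [Measure.volume_eq_prod, Measure.prod_apply hTm]
  calc ∫⁻ x, volume (Prod.mk x ⁻¹' T)
      ≤ ∫⁻ x, (Icc (q0.1 - d) (q0.1 + d)).indicator (fun _ => ENNReal.ofReal (2 * R)) x := by
        apply lintegral_mono
        intro x
        by_cases hx : x ∈ Icc (q0.1 - d) (q0.1 + d)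
        · have e : Prod.mk x ⁻¹' T = Icc (g x - R) (g x + R) := by
            ext t
            exact ⟨fun h => h.2, fun h => ⟨hx, h⟩⟩
          simp only [e, Set.indicator_of_mem hx, Real.volume_Icc]
          apply ENNReal.ofReal_le_ofReal
          linarith
        · have e : Prod.mk x ⁻¹' T = ∅ := by
            ext t
            exact ⟨fun h => hx h.1, fun h => h.elim⟩
          simp [e]
    _ = ENNReal.ofReal (4 * d * R) := by
        rw [lintegral_indicator_const measurableSet_Icc, Real.volume_Icc,
          ← ENNReal.ofReal_mul (by positivity)]
        congr 1
        ring

lemma diam_aux {lam ξ τ N K x x' t t' : ℝ} (hlam : 0 < lam) (hξ : ξ ≠ 0) (hN : 1 ≤ N) (hK : 0 < K)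
    (h1 : |phase lam x t + phase lam (ξ - x) (τ - t)| ≤ 4 * N)
    (h2 : |phase lam x' t' + phase lam (ξ - x') (τ - t')| ≤ 4 * N)
    (hx : x ≠ 0) (hx2 : ξ - x ≠ 0) (hx' : x' ≠ 0) (hx2' : ξ - x' ≠ 0)
    (hp : 0 < (x * (ξ - x)) * (x' * (ξ - x')))
    (hs : K ≤ |x - (ξ - x)|) (hs' : K ≤ |x' - (ξ - x')|)
    (hss : 0 ≤ (2 * x - ξ) * (2 * x' - ξ)) :
    |x - x'| ≤ 3 * N * min (|ξ| ^ (-(1 : ℝ) / 2)) (K⁻¹ * |ξ|⁻¹) := by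
  have hX : 0 < |ξ| := abs_pos.2 hξ
  have hdiff : (phase lam x t + phase lam (ξ - x) (τ - t))
      - (phase lam x' t' + phase lam (ξ - x') (τ - t'))
      = ξ * ((x - x') * ((2 * x - ξ) + (2 * x' - ξ))) / 2 *
        (3 + 1 / (lam ^ 4 * ((x * (ξ - x)) * (x' * (ξ - x'))))) := by
    unfold phase
    field_simp
    ring
  have hA : 3 * (|ξ| * (|x - x'| * |(2 * x - ξ) + (2 * x' - ξ)|)) ≤ 16 * N := by
    have hb := (abs_sub _ _).trans (add_le_add h1 h2)
    rw [hdiff, abs_mul, abs_div, abs_mul, abs_mul] at hb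
    have h3 : 3 ≤ |3 + 1 / (lam ^ 4 * ((x * (ξ - x)) * (x' * (ξ - x'))))| := by
      refine le_trans ?_ (le_abs_self _)
      have : 0 < 1 / (lam ^ 4 * ((x * (ξ - x)) * (x' * (ξ - x')))) :=
        div_pos one_pos (mul_pos (by positivity) hp)
      linarith
    rw [abs_of_pos (show (0:ℝ) < 2 by norm_num)] at hb
    have h4 := mul_le_mul_of_nonneg_left h3
      (show 0 ≤ |ξ| * (|x - x'| * |(2 * x - ξ) + (2 * x' - ξ)|) / 2 by positivity)
    linarith
  have hsum : |(2 * x - ξ) + (2 * x' - ξ)| = |2 * x - ξ| + |2 * x' - ξ| := by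
    rw [abs_add_eq_add_abs_iff]
    exact mul_nonneg_iff.1 hss
  have hs1 : K ≤ |2 * x - ξ| := by
    rwa [show x - (ξ - x) = 2 * x - ξ by ring] at hs
  have hs1' : K ≤ |2 * x' - ξ| := by
    rwa [show x' - (ξ - x') = 2 * x' - ξ by ring] at hs'
  have hd2 : 2 * |x - x'| ≤ |(2 * x - ξ) + (2 * x' - ξ)| := by
    have h := abs_sub (2 * x - ξ) (2 * x' - ξ)
    rw [show (2 * x - ξ) - (2 * x' - ξ) = 2 * (x - x') by ring, abs_mul,
      abs_of_pos (show (0:ℝ) < 2 by norm_num)] at h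
    linarith
  have hK2 : 2 * K ≤ |(2 * x - ξ) + (2 * x' - ξ)| := by linarith
  have hd0 : 0 ≤ |x - x'| := abs_nonneg _
  have hB1 : |ξ| * |x - x'| * K ≤ 3 * N := by
    have := mul_le_mul_of_nonneg_left hK2 (show 0 ≤ |ξ| * |x - x'| by positivity)
    linarith
  have hB2 : |ξ| * |x - x'| ^ 2 ≤ 3 * N := by
    have := mul_le_mul_of_nonneg_left hd2 (show 0 ≤ |ξ| * |x - x'| by positivity)
    nlinarith
  rw [mul_min_of_nonneg _ _ (by positivity)]
  refine le_min ?_ ?_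
  · have hr : 0 < |ξ| ^ (-(1 : ℝ) / 2) := by positivity
    have hr2 : (|ξ| ^ (-(1 : ℝ) / 2)) ^ 2 = |ξ|⁻¹ := by
      rw [← Real.rpow_natCast, ← Real.rpow_mul hX.le, ← Real.rpow_neg_one]
      norm_num
    refine (sq_le_sq₀ hd0 (by positivity)).1 ?_
    rw [mul_pow, hr2, ← div_eq_mul_inv, le_div_iff₀ hX]
    nlinarith
  · rw [← mul_inv, ← div_eq_mul_inv, le_div_iff₀ (by positivity)]
    linarith

/-- Measure bound for the set of near frequencies with localized modulations, under the
nonresonance condition of the Ostrovsky equation with positive dispersion. -/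
theorem ostrovsky_measure_bound :
    ∃ C : ℝ, 0 < C ∧ ∀ lam : ℝ, 1 ≤ lam → ∀ ξ τ : ℝ, ξ ≠ 0 →
    ∀ k₁ k₂ : ℕ, ∀ K : ℝ, 0 < K →
      volume {q : ℝ × ℝ |
          q.1 ≠ 0 ∧ ξ - q.1 ≠ 0 ∧
          jb (phase lam q.1 q.2) ≤ 2 ^ (k₁ + 1) ∧
          jb (phase lam (ξ - q.1) (τ - q.2)) ≤ 2 ^ (k₂ + 1) ∧
          K ≤ |q.1 - (ξ - q.1)| ∧
          (0 < q.1 * (ξ - q.1) ∨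
            1 / 2 < |1 + 4 / (3 * lam ^ 4 * ξ ^ 2 * q.1 * (ξ - q.1))|)}
        ≤ ENNReal.ofReal (C * min (|ξ| ^ (-(1 : ℝ) / 2) * 2 ^ (k₁ + k₂))
            (K⁻¹ * |ξ|⁻¹ * 2 ^ (k₁ + k₂))) := by
  refine ⟨96, by norm_num, ?_⟩
  intro lam hlam ξ τ hξ k₁ k₂ K hK
  have hX : 0 < |ξ| := abs_pos.2 hξ
  set m : ℝ := min (|ξ| ^ (-(1 : ℝ) / 2)) (K⁻¹ * |ξ|⁻¹) with hm
  have hm0 : 0 ≤ m := by positivity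
  have hrhs : min (|ξ| ^ (-(1 : ℝ) / 2) * 2 ^ (k₁ + k₂)) (K⁻¹ * |ξ|⁻¹ * 2 ^ (k₁ + k₂))
      = m * 2 ^ (k₁ + k₂) := by
    rw [hm, min_mul_of_nonneg _ _ (by positivity)]
  rw [hrhs]
  -- choose the better of the two modulations for the slices
  obtain ⟨N, R, g, hN1, hR0, hg, h1, h2, hNR, hslice⟩ : ∃ (N R : ℝ) (g : ℝ → ℝ), 1 ≤ N ∧ 0 ≤ R ∧
      Measurable g ∧ (2:ℝ) ^ (k₁ + 1) ≤ 2 * N ∧ (2:ℝ) ^ (k₂ + 1) ≤ 2 * N ∧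
      N * R = 2 * 2 ^ (k₁ + k₂) ∧
      ∀ x t : ℝ, |phase lam x t| ≤ 2 ^ (k₁ + 1) → |phase lam (ξ - x) (τ - t)| ≤ 2 ^ (k₂ + 1) →
        |t - g x| ≤ R := by
    rcases le_total k₁ k₂ with h | h
    · have hp : (2:ℝ) ^ k₁ ≤ 2 ^ k₂ := pow_le_pow_right₀ (by norm_num) h
      refine ⟨2 ^ k₂, 2 ^ (k₁ + 1), fun x => -(x ^ 3 + 1 / (lam ^ 4 * x)),
        one_le_pow₀ (by norm_num), by positivity, by fun_prop, ?_, ?_, by ring, ?_⟩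
      · rw [pow_succ]; linarith
      · rw [pow_succ]; linarith
      · intro x t a _
        have : t - -(x ^ 3 + 1 / (lam ^ 4 * x)) = phase lam x t := by unfold phase; ring
        simpa only [this] using a
    · have hp : (2:ℝ) ^ k₂ ≤ 2 ^ k₁ := pow_le_pow_right₀ (by norm_num) h
      refine ⟨2 ^ k₁, 2 ^ (k₂ + 1), fun x => τ + (ξ - x) ^ 3 + 1 / (lam ^ 4 * (ξ - x)),
        one_le_pow₀ (by norm_num), by positivity, by fun_prop, ?_, ?_, by ring, ?_⟩
      · rw [pow_succ]; linarith
      · rw [pow_succ]; linarith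
      · intro x t _ b
        have : t - (τ + (ξ - x) ^ 3 + 1 / (lam ^ 4 * (ξ - x))) = - phase lam (ξ - x) (τ - t) := by
          unfold phase; ring
        simpa only [this, abs_neg] using b
  set S := {q : ℝ × ℝ |
          q.1 ≠ 0 ∧ ξ - q.1 ≠ 0 ∧
          jb (phase lam q.1 q.2) ≤ 2 ^ (k₁ + 1) ∧
          jb (phase lam (ξ - q.1) (τ - q.2)) ≤ 2 ^ (k₂ + 1) ∧
          K ≤ |q.1 - (ξ - q.1)| ∧
          (0 < q.1 * (ξ - q.1) ∨
            1 / 2 < |1 + 4 / (3 * lam ^ 4 * ξ ^ 2 * q.1 * (ξ - q.1))|)} with hS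
  have key : ∀ σ ε : ℝ, |σ| = 1 → |ε| = 1 →
      volume (S ∩ {q | 0 < σ * (q.1 * (ξ - q.1)) ∧ 0 ≤ ε * (2 * q.1 - ξ)})
        ≤ ENNReal.ofReal (24 * (m * 2 ^ (k₁ + k₂))) := by
    intro σ ε hσ hε
    have e : 24 * (m * 2 ^ (k₁ + k₂)) = 4 * (3 * N * m) * R := by
      linear_combination (-12 * m) * hNR
    rw [e]
    refine vol_aux hg (by positivity) hR0 ?_ ?_
    · rintro ⟨x, t⟩ ⟨⟨hx, hx2, hj1, hj2, hs, -⟩, hp, hsg⟩ ⟨x', t'⟩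
        ⟨⟨hx', hx2', hj1', hj2', hs', -⟩, hp', hsg'⟩
      dsimp only at *
      refine diam_aux (lt_of_lt_of_le one_pos hlam) hξ hN1 hK ?_ ?_ hx hx2 hx' hx2' ?_ hs hs' ?_
        (t := t) (t' := t') (τ := τ)
      · have := abs_add_le (phase lam x t) (phase lam (ξ - x) (τ - t))
        linarith [abs_le_jb (phase lam x t), abs_le_jb (phase lam (ξ - x) (τ - t))]
      · have := abs_add_le (phase lam x' t') (phase lam (ξ - x') (τ - t'))
        linarith [abs_le_jb (phase lam x' t'), abs_le_jb (phase lam (ξ - x') (τ - t'))]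
      · have := mul_pos hp hp'
        have h1 : σ ^ 2 = 1 := by rw [← sq_abs, hσ]; norm_num
        calc 0 < _ := this
          _ = σ ^ 2 * ((x * (ξ - x)) * (x' * (ξ - x'))) := by ring
          _ = _ := by rw [h1, one_mul]
      · have := mul_nonneg hsg hsg'
        have h1 : ε ^ 2 = 1 := by rw [← sq_abs, hε]; norm_num
        calc 0 ≤ _ := this
          _ = ε ^ 2 * ((2 * x - ξ) * (2 * x' - ξ)) := by ring
          _ = _ := by rw [h1, one_mul]
    · rintro ⟨x, t⟩ ⟨⟨hx, hx2, hj1, hj2, hs, -⟩, -⟩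
      exact hslice x t ((abs_le_jb _).trans hj1) ((abs_le_jb _).trans hj2)
  have hcover : S ⊆ ((S ∩ {q | 0 < (1:ℝ) * (q.1 * (ξ - q.1)) ∧ 0 ≤ (1:ℝ) * (2 * q.1 - ξ)}) ∪
      (S ∩ {q | 0 < (1:ℝ) * (q.1 * (ξ - q.1)) ∧ 0 ≤ (-1:ℝ) * (2 * q.1 - ξ)})) ∪
      ((S ∩ {q | 0 < (-1:ℝ) * (q.1 * (ξ - q.1)) ∧ 0 ≤ (1:ℝ) * (2 * q.1 - ξ)}) ∪
      (S ∩ {q | 0 < (-1:ℝ) * (q.1 * (ξ - q.1)) ∧ 0 ≤ (-1:ℝ) * (2 * q.1 - ξ)})) := by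
    intro q hq
    have hne : q.1 * (ξ - q.1) ≠ 0 := mul_ne_zero hq.1 hq.2.1
    rcases lt_or_gt_of_ne hne with h | h <;> rcases le_total 0 (2 * q.1 - ξ) with h' | h'
    · exact Or.inr (Or.inl ⟨hq, by linarith, by linarith⟩)
    · exact Or.inr (Or.inr ⟨hq, by linarith, by linarith⟩)
    · exact Or.inl (Or.inl ⟨hq, by linarith, by linarith⟩)
    · exact Or.inl (Or.inr ⟨hq, by linarith, by linarith⟩)
  have hB : 0 ≤ 24 * (m * 2 ^ (k₁ + k₂)) := by positivity
  refine (measure_mono hcover).trans ((measure_union_le _ _).trans ?_)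
  refine (add_le_add (measure_union_le _ _) (measure_union_le _ _)).trans ?_
  refine (add_le_add (add_le_add (key 1 1 (by simp) (by simp)) (key 1 (-1) (by simp) (by simp)))
    (add_le_add (key (-1) 1 (by simp) (by simp)) (key (-1) (-1) (by simp) (by simp)))).trans ?_
  rw [← ENNReal.ofReal_add hB hB, ← ENNReal.ofReal_add (by positivity) (by positivity)]
  apply ENNReal.ofReal_le_ofReal
  linarith

end
end

section
/- There exists an absolute constant C > 0 such that for all λ ≥ 1, all real ξ₂ ≠ 0 and τ₂, all integers k, k₁ ≥ 0 and all K₁ > 0 the following holds. Let Λ be the set of (ξ, τ) ∈ ℝ² such that, writing ξ₁ = ξ − ξ₂ and τ₁ = τ − τ₂: ξ ≠ 0, ξ₁ ≠ 0, ⟨τ + ξ³ + 1/(λ⁴ξ)⟩ ≤ 2^{k+1}, ⟨τ₁ + ξ₁³ + 1/(λ⁴ξ₁)⟩ ≤ 2^{k₁+1}, |ξ + ξ₁| ≥ K₁, and either ξξ₁ < 0 or |1 − 4/(3λ⁴ξξ₁ξ₂²)| > 1/2. Then the two-dimensional Lebesgue measure of Λ is at most C · min{ |ξ₂|^{-1/2}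 2^{k/2 + k₁}, K₁^{-1} |ξ₂|^{-1} 2^{k + k₁} }. -/
open MeasureTheory Set
open scoped ENNReal NNReal

noncomputable section

lemma abs_le_of_jb_le {x B : ℝ} (h : jb x ≤ B) : |x| ≤ B := by
  refine le_trans ?_ h
  unfold jb
  apply Real.abs_le_sqrt
  linarith

/-- Volume of a slab of half-width `m` over a base set `E`. -/
lemma slab_volume_le (E : Set ℝ) (c : ℝ → ℝ) (hc : Measurable c) (m : ℝ) :
    volume {p : ℝ × ℝ | p.1 ∈ E ∧ |p.2 + c p.1| ≤ m} ≤ ENNReal.ofReal (2 * m) * volume E := by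
  set A := toMeasurable volume E with hA
  have hAm : MeasurableSet A := measurableSet_toMeasurable _ _
  have hT : MeasurableSet {p : ℝ × ℝ | p.1 ∈ A ∧ |p.2 + c p.1| ≤ m} := by
    apply MeasurableSet.inter
    · exact measurable_fst hAm
    · have hf : Measurable (fun p : ℝ × ℝ => |p.2 + c p.1|) :=
        (measurable_snd.add (hc.comp measurable_fst)).abs
      exact hf measurableSet_Iic
  calc volume {p : ℝ × ℝ | p.1 ∈ E ∧ |p.2 + c p.1| ≤ m}
      ≤ volume {p : ℝ × ℝ | p.1 ∈ A ∧ |p.2 + c p.1| ≤ m} := by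
        apply measure_mono
        rintro p ⟨h1, h2⟩
        exact ⟨subset_toMeasurable _ _ h1, h2⟩
    _ = ∫⁻ x, volume (Prod.mk x ⁻¹' {p : ℝ × ℝ | p.1 ∈ A ∧ |p.2 + c p.1| ≤ m}) := by
        rw [Measure.volume_eq_prod, Measure.prod_apply hT]
    _ ≤ ∫⁻ x, A.indicator (fun _ => ENNReal.ofReal (2 * m)) x := by
        apply lintegral_mono
        intro x
        by_cases hx : x ∈ A
        · simp only [Set.indicator_of_mem hx]
          calc _ ≤ volume (Icc (-m - c x) (m - c x)) := by
                apply measure_mono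
                rintro y ⟨_, hy⟩
                have := abs_le.mp hy
                simp only [] at this
                constructor <;> linarith [this.1, this.2]
            _ = ENNReal.ofReal (2 * m) := by
                rw [Real.volume_Icc]; congr 1; ring
        · simp [hx]
    _ = ENNReal.ofReal (2 * m) * volume E := by
        rw [lintegral_indicator hAm, setLIntegral_const, hA, measure_toMeasurable]

lemma volume_le_of_pairwise (E : Set ℝ) (D : ℝ) (h : ∀ u ∈ E, ∀ v ∈ E, |u - v| ≤ D) :
    volume E ≤ ENNReal.ofReal D := by
  refine (Real.volume_le_diam E).trans ?_
  apply Metric.ediam_le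
  intro u hu v hv
  rw [edist_dist, Real.dist_eq]
  exact ENNReal.ofReal_le_ofReal (h u hu v hv)

/-- The resonance function. -/
def resF (lam ξ₂ τ₂ x : ℝ) : ℝ :=
  τ₂ + x ^ 3 - (x - ξ₂) ^ 3 + 1 / (lam ^ 4 * x) - 1 / (lam ^ 4 * (x - ξ₂))

lemma resF_sub {lam ξ₂ τ₂ u v : ℝ} (hl : 1 ≤ lam) (hu : u ≠ 0) (hu1 : u - ξ₂ ≠ 0)
    (hv : v ≠ 0) (hv1 : v - ξ₂ ≠ 0) :
    resF lam ξ₂ τ₂ u - resF lam ξ₂ τ₂ v =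
      ξ₂ * ((u - v) * (u + v - ξ₂)) *
        (3 + 1 / (lam ^ 4 * ((u * (u - ξ₂)) * (v * (v - ξ₂))))) := by
  have : lam ≠ 0 := by linarith
  unfold resF
  field_simp
  ring

lemma resF_lower {lam ξ₂ τ₂ u v M : ℝ} (hl : 1 ≤ lam)
    (hs : 0 < (u * (u - ξ₂)) * (v * (v - ξ₂)))
    (hMu : |resF lam ξ₂ τ₂ u| ≤ M) (hMv : |resF lam ξ₂ τ₂ v| ≤ M) :
    3 * |ξ₂| * (|u - v| * |u + v - ξ₂|) ≤ 2 * M := by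
  have hu : u ≠ 0 := by rintro rfl; simp at hs
  have hv : v ≠ 0 := by rintro rfl; simp at hs
  have hu1 : u - ξ₂ ≠ 0 := by intro h; simp [h] at hs
  have hv1 : v - ξ₂ ≠ 0 := by intro h; simp [h] at hs
  have h1 := resF_sub (τ₂ := τ₂) hl hu hu1 hv hv1
  have h2 : |resF lam ξ₂ τ₂ u - resF lam ξ₂ τ₂ v| ≤ 2 * M := by
    have := abs_sub (resF lam ξ₂ τ₂ u) (resF lam ξ₂ τ₂ v)
    linarith
  have hq : 0 ≤ 1 / (lam ^ 4 * ((u * (u - ξ₂)) * (v * (v - ξ₂)))) := by positivity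
  rw [h1, abs_mul, abs_mul, abs_mul, abs_of_nonneg (by linarith : 0 ≤ 3 + 1 / (lam ^ 4 * ((u * (u - ξ₂)) * (v * (v - ξ₂)))))] at h2
  have hp : 0 ≤ |ξ₂| * (|u - v| * |u + v - ξ₂|) := by positivity
  nlinarith [mul_nonneg hp hq]

/-- Lower bound for `|u + v - ξ₂|` when `2u - ξ₂`, `2v - ξ₂` have the same sign. -/
lemma sum_lower {ξ₂ u v K : ℝ} (hs : 0 ≤ (2 * u - ξ₂) * (2 * v - ξ₂))
    (hu : K ≤ |u + (u - ξ₂)|) (hv : K ≤ |v + (v - ξ₂)|) :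
    K ≤ |u + v - ξ₂| ∧ |u - v| ≤ |u + v - ξ₂| := by
  constructor
  · have : |u + v - ξ₂| * 2 = |u + (u - ξ₂)| + |v + (v - ξ₂)| := by
      have e : |u + v - ξ₂| * 2 = |(u + (u - ξ₂)) + (v + (v - ξ₂))| := by
        have ee : (u + (u - ξ₂)) + (v + (v - ξ₂)) = (u + v - ξ₂) * 2 := by ring
        rw [ee, abs_mul, abs_two]
      rw [e]
      apply abs_add_eq_add_abs_iff _ _ |>.mpr
      have hss : 0 ≤ (u + (u - ξ₂)) * (v + (v - ξ₂)) := by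
        convert hs using 1; ring
      exact mul_nonneg_iff.mp hss
    linarith
  · apply sq_le_sq.mp
    nlinarith

lemma base_volume {lam ξ₂ τ₂ M K D : ℝ} (hl : 1 ≤ lam)
    (hD : ∀ d w : ℝ, 0 ≤ d → K ≤ w → d ≤ w → 3 * |ξ₂| * (d * w) ≤ 2 * M → d ≤ D) :
    volume {x : ℝ | x ≠ 0 ∧ x - ξ₂ ≠ 0 ∧ |resF lam ξ₂ τ₂ x| ≤ M ∧ K ≤ |x + (x - ξ₂)|}
      ≤ 4 * ENNReal.ofReal D := by
  set E := {x : ℝ | x ≠ 0 ∧ x - ξ₂ ≠ 0 ∧ |resF lam ξ₂ τ₂ x| ≤ M ∧ K ≤ |x + (x - ξ₂)|} with hE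
  have key : ∀ P : Set ℝ, (∀ u ∈ P, ∀ v ∈ P, 0 < (u * (u - ξ₂)) * (v * (v - ξ₂)) ∧
      0 ≤ (2 * u - ξ₂) * (2 * v - ξ₂)) → volume (E ∩ P) ≤ ENNReal.ofReal D := by
    intro P hP
    apply volume_le_of_pairwise
    rintro u ⟨⟨_, _, hu, hKu⟩, hPu⟩ v ⟨⟨_, _, hv, hKv⟩, hPv⟩
    obtain ⟨h1, h2⟩ := hP u hPu v hPv
    obtain ⟨h3, h4⟩ := sum_lower h2 hKu hKv
    exact hD _ _ (abs_nonneg _) h3 h4 (resF_lower hl h1 hu hv)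
  have hcov : E ⊆ ((E ∩ {x | 0 < x * (x - ξ₂) ∧ 0 ≤ 2 * x - ξ₂}) ∪
      (E ∩ {x | 0 < x * (x - ξ₂) ∧ 2 * x - ξ₂ ≤ 0})) ∪
      ((E ∩ {x | x * (x - ξ₂) < 0 ∧ 0 ≤ 2 * x - ξ₂}) ∪
      (E ∩ {x | x * (x - ξ₂) < 0 ∧ 2 * x - ξ₂ ≤ 0})) := by
    intro x hx
    have hne : x * (x - ξ₂) ≠ 0 := mul_ne_zero hx.1 hx.2.1
    rcases lt_or_gt_of_ne hne with h | h <;> rcases le_total 0 (2 * x - ξ₂) with hsg | hsg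
    · exact Or.inr (Or.inl ⟨hx, h, hsg⟩)
    · exact Or.inr (Or.inr ⟨hx, h, hsg⟩)
    · exact Or.inl (Or.inl ⟨hx, h, hsg⟩)
    · exact Or.inl (Or.inr ⟨hx, h, hsg⟩)
  refine (measure_mono hcov).trans ?_
  refine (measure_union_le _ _).trans ?_
  have e : 4 * ENNReal.ofReal D = (ENNReal.ofReal D + ENNReal.ofReal D) +
      (ENNReal.ofReal D + ENNReal.ofReal D) := by ring
  rw [e]
  refine add_le_add ((measure_union_le _ _).trans (add_le_add ?_ ?_))
    ((measure_union_le _ _).trans (add_le_add ?_ ?_))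
  · exact key _ fun u hu v hv => ⟨mul_pos hu.1 hv.1, mul_nonneg hu.2 hv.2⟩
  · exact key _ fun u hu v hv => ⟨mul_pos hu.1 hv.1, mul_nonneg_of_nonpos_of_nonpos hu.2 hv.2⟩
  · exact key _ fun u hu v hv => ⟨mul_pos_of_neg_of_neg hu.1 hv.1, mul_nonneg hu.2 hv.2⟩
  · exact key _ fun u hu v hv =>
      ⟨mul_pos_of_neg_of_neg hu.1 hv.1, mul_nonneg_of_nonpos_of_nonpos hu.2 hv.2⟩

lemma full_volume {lam ξ₂ τ₂ K D a b : ℝ} (hl : 1 ≤ lam) (ha : 0 < a) (hb : 0 < b)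
    (hD : ∀ d w : ℝ, 0 ≤ d → K ≤ w → d ≤ w → 3 * |ξ₂| * (d * w) ≤ 2 * (a + b) → d ≤ D) :
    volume {p : ℝ × ℝ | p.1 ≠ 0 ∧ p.1 - ξ₂ ≠ 0 ∧ |phase lam p.1 p.2| ≤ a ∧
      |phase lam (p.1 - ξ₂) (p.2 - τ₂)| ≤ b ∧ K ≤ |p.1 + (p.1 - ξ₂)|}
      ≤ ENNReal.ofReal (8 * min a b * D) := by
  have hB := base_volume (τ₂ := τ₂) hl hD
  set E := {x : ℝ | x ≠ 0 ∧ x - ξ₂ ≠ 0 ∧ |resF lam ξ₂ τ₂ x| ≤ a + b ∧ K ≤ |x + (x - ξ₂)|} with hE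
  have hmem : ∀ p : ℝ × ℝ, (p.1 ≠ 0 ∧ p.1 - ξ₂ ≠ 0 ∧ |phase lam p.1 p.2| ≤ a ∧
      |phase lam (p.1 - ξ₂) (p.2 - τ₂)| ≤ b ∧ K ≤ |p.1 + (p.1 - ξ₂)|) → p.1 ∈ E := by
    rintro p ⟨h1, h2, h3, h4, h5⟩
    refine ⟨h1, h2, ?_, h5⟩
    have e : resF lam ξ₂ τ₂ p.1 = phase lam p.1 p.2 - phase lam (p.1 - ξ₂) (p.2 - τ₂) := by
      unfold resF phase; ring
    rw [e]
    exact (abs_sub _ _).trans (add_le_add h3 h4)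
  have fin : ∀ m : ℝ, 0 < m → ENNReal.ofReal (2 * m) * volume E ≤ ENNReal.ofReal (8 * m * D) := by
    intro m hm
    calc ENNReal.ofReal (2 * m) * volume E ≤ ENNReal.ofReal (2 * m) * (4 * ENNReal.ofReal D) := by
          gcongr
      _ = ENNReal.ofReal (8 * m * D) := by
          rw [show (8 * m * D) = (2 * m) * (4 * D) by ring, ENNReal.ofReal_mul (p := 2 * m) (by positivity),
            ENNReal.ofReal_mul (p := 4) (by norm_num)]
          norm_num
  rcases min_choice a b with hm | hm <;> rw [hm]
  · refine le_trans ?_ (fin a ha)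
    refine le_trans (measure_mono ?_)
      (slab_volume_le E (fun x => x ^ 3 + 1 / (lam ^ 4 * x)) (by fun_prop) a)
    intro p hp
    refine ⟨hmem p hp, ?_⟩
    have := hp.2.2.1
    unfold phase at this
    rw [← add_assoc]; exact this
  · refine le_trans ?_ (fin b hb)
    refine le_trans (measure_mono ?_)
      (slab_volume_le E (fun x => -τ₂ + (x - ξ₂) ^ 3 + 1 / (lam ^ 4 * (x - ξ₂))) (by fun_prop) b)
    intro p hp
    refine ⟨hmem p hp, ?_⟩
    have := hp.2.2.2.1
    unfold phase at this
    convert this using 2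
    ring

/-- Dual-form measure bound, over the output variables `(ξ,τ)`, for localized modulations
under the nonresonance condition of the Ostrovsky equation with positive dispersion. -/
theorem ostrovsky_dual_measure_bound :
    ∃ C : ℝ, 0 < C ∧ ∀ lam : ℝ, 1 ≤ lam → ∀ ξ₂ τ₂ : ℝ, ξ₂ ≠ 0 →
    ∀ k k₁ : ℕ, ∀ K₁ : ℝ, 0 < K₁ →
      volume {p : ℝ × ℝ |
          p.1 ≠ 0 ∧ p.1 - ξ₂ ≠ 0 ∧
          jb (phase lam p.1 p.2) ≤ 2 ^ (k + 1) ∧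
          jb (phase lam (p.1 - ξ₂) (p.2 - τ₂)) ≤ 2 ^ (k₁ + 1) ∧
          K₁ ≤ |p.1 + (p.1 - ξ₂)| ∧
          (p.1 * (p.1 - ξ₂) < 0 ∨
            1 / 2 < |1 - 4 / (3 * lam ^ 4 * p.1 * (p.1 - ξ₂) * ξ₂ ^ 2)|)}
        ≤ ENNReal.ofReal (C * min (|ξ₂| ^ (-(1 : ℝ) / 2) * 2 ^ ((k : ℝ) / 2 + (k₁ : ℝ)))
            (K₁⁻¹ * |ξ₂|⁻¹ * 2 ^ (k + k₁))) := by
  refine ⟨64, by norm_num, ?_⟩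
  intro lam hl ξ₂ τ₂ hξ k k₁ K hK
  have hx : 0 < |ξ₂| := abs_pos.mpr hξ
  set a : ℝ := 2 ^ k with ha
  set b : ℝ := 2 ^ k₁ with hb
  have ha0 : 0 < a := by positivity
  have hb0 : 0 < b := by positivity
  have hmn : 0 < min a b := lt_min ha0 hb0
  have hma : min a b ≤ a := min_le_left _ _
  have hmb : min a b ≤ b := min_le_right _ _
  have hmm : min (2 * a) (2 * b) = 2 * min a b := by
    rw [mul_min_of_nonneg _ _ (by norm_num : (0:ℝ) ≤ 2)]
  have hsub : ∀ D : ℝ, (∀ d w : ℝ, 0 ≤ d → K ≤ w → d ≤ w →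
      3 * |ξ₂| * (d * w) ≤ 2 * (2 * a + 2 * b) → d ≤ D) → ∀ R : ℝ, 16 * min a b * D ≤ R →
      volume {p : ℝ × ℝ |
          p.1 ≠ 0 ∧ p.1 - ξ₂ ≠ 0 ∧
          jb (phase lam p.1 p.2) ≤ 2 ^ (k + 1) ∧
          jb (phase lam (p.1 - ξ₂) (p.2 - τ₂)) ≤ 2 ^ (k₁ + 1) ∧
          K ≤ |p.1 + (p.1 - ξ₂)| ∧
          (p.1 * (p.1 - ξ₂) < 0 ∨
            1 / 2 < |1 - 4 / (3 * lam ^ 4 * p.1 * (p.1 - ξ₂) * ξ₂ ^ 2)|)}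
        ≤ ENNReal.ofReal R := by
    intro D hD R hR
    have h := full_volume (τ₂ := τ₂) hl (by positivity : 0 < 2 * a) (by positivity : 0 < 2 * b) hD
    refine le_trans (measure_mono ?_) (h.trans (ENNReal.ofReal_le_ofReal ?_))
    · rintro p ⟨h1, h2, h3, h4, h5, _⟩
      refine ⟨h1, h2, ?_, ?_, h5⟩
      · have := abs_le_of_jb_le h3
        rwa [pow_succ, mul_comm] at this
      · have := abs_le_of_jb_le h4
        rwa [pow_succ, mul_comm] at this
    · rw [hmm]; linarith
  rcases min_choice (|ξ₂| ^ (-(1 : ℝ) / 2) * 2 ^ ((k : ℝ) / 2 + (k₁ : ℝ)))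
            (K⁻¹ * |ξ₂|⁻¹ * 2 ^ (k + k₁)) with hm | hm <;> rw [hm]
  · apply hsub (Real.sqrt (4 * (a + b) / (3 * |ξ₂|)))
    · intro d w hd _ hdw h
      apply Real.le_sqrt_of_sq_le
      rw [le_div_iff₀ (by positivity)]
      have : d * d ≤ d * w := mul_le_mul_of_nonneg_left hdw hd
      nlinarith [mul_le_mul_of_nonneg_left this hx.le]
    · have hR1 : |ξ₂| ^ (-(1 : ℝ) / 2) = (Real.sqrt |ξ₂|)⁻¹ := by
        rw [Real.sqrt_eq_rpow, ← Real.rpow_neg hx.le]; norm_num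
      have hR2 : (2 : ℝ) ^ ((k : ℝ) / 2 + (k₁ : ℝ)) = Real.sqrt a * b := by
        rw [Real.rpow_add (by norm_num), Real.rpow_natCast, Real.sqrt_eq_rpow, ha,
          ← Real.rpow_natCast 2 k, ← Real.rpow_mul (by norm_num)]
        congr 2; ring
      rw [hR1, hR2]
      apply le_of_sq_le_sq _ (by positivity)
      rw [mul_pow, mul_pow, mul_pow, mul_pow, mul_pow, inv_pow, Real.sq_sqrt (by positivity),
        Real.sq_sqrt hx.le, Real.sq_sqrt ha0.le]
      have h1 : (min a b) ^ 2 * a ≤ a * b ^ 2 := by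
        rw [mul_comm]; gcongr
      have h2 : (min a b) ^ 2 * b ≤ a * b ^ 2 := by
        calc (min a b) ^ 2 * b = min a b * min a b * b := by ring
          _ ≤ a * b * b := by gcongr
          _ = a * b ^ 2 := by ring
      have e1 : 16 ^ 2 * (min a b) ^ 2 * (4 * (a + b) / (3 * |ξ₂|)) =
        (16 ^ 2 * 4 / 3 * ((min a b) ^ 2 * a + (min a b) ^ 2 * b)) * |ξ₂|⁻¹ := by
        field_simp
      have e2 : 64 ^ 2 * (|ξ₂|⁻¹ * (a * b ^ 2)) = (64 ^ 2 * (a * b ^ 2)) * |ξ₂|⁻¹ := by ring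
      rw [e1, e2]
      have h0 : 0 ≤ a * b ^ 2 := by positivity
      refine mul_le_mul_of_nonneg_right ?_ (by positivity)
      linarith
  · apply hsub (4 * (a + b) / (3 * |ξ₂| * K))
    · intro d w hd hKw _ h
      rw [le_div_iff₀ (by positivity)]
      have : d * K ≤ d * w := mul_le_mul_of_nonneg_left hKw hd
      nlinarith [mul_le_mul_of_nonneg_left this hx.le]
    · have h1 : min a b * (a + b) ≤ 2 * (a * b) := by
        nlinarith [mul_le_mul_of_nonneg_right hmb ha0.le, mul_le_mul_of_nonneg_right hma hb0.le]
      have e1 : 16 * min a b * (4 * (a + b) / (3 * |ξ₂| * K)) =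
        (64 / 3 * (min a b * (a + b))) * (K⁻¹ * |ξ₂|⁻¹) := by
        field_simp
        norm_num
      have e2 : 64 * (K⁻¹ * |ξ₂|⁻¹ * 2 ^ (k + k₁)) = (64 * (a * b)) * (K⁻¹ * |ξ₂|⁻¹) := by
        rw [pow_add]; ring
      rw [e1, e2]
      have h0 : 0 ≤ a * b := by positivity
      refine mul_le_mul_of_nonneg_right ?_ (by positivity)
      linarith

end
end
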